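/- Value stability under ε-bin-wise calibration: with L = max_{a∈A} ‖r_a‖₂ and Q_bin,ε = { measurable q : [0,1]^d → [0,1]^d : ‖∫_{B_j} (q(v) − v) dν(v)‖₂ ≤ ε for j = 1,…,J }, one has Σ_{j=1}^J P_j · val(m_j) − J·L·ε ≤ inf_{q∈Q_bin,ε} ∫ val(q(v)) dν(v) ≤ Σ_{j=1}^J P_j · val(m_j). -/

import Mathlib

/-!
Value stability holds because the value function is a maximum of affine functions.

Lower bound: on the bin `B j` with mean `m j`, choose an action `a` that is optimal at `m j`.
Then `val (q v) ≥ util a (q v)`, and integrating the affine function `util a` over the bin gives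
`P j * val (m j)` plus the error term `r a ⬝ ∫_{B j} (q v - v)`, which Cauchy-Schwarz bounds below
by `-L * ε` (`bin_lower`). Summing over the bins yields the claim.

Upper bound: the step function `binStep` sending each point to the mean of its bin lies in
`QbinEps` (each bin average of `q v - v` vanishes exactly), and its value is
`∑ j, P j * val (m j)`.
-/

open MeasureTheory

noncomputable section

/-- The cube `[0,1]^d`. -/
def cube (d : ℕ) : Set (Fin d → ℝ) := Set.Icc 0 1

/-- Euclidean dot product on `ℝ^d`. -/
def dot {d : ℕ} (x y : Fin d → ℝ) : ℝ := ∑ i, x i * y i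

/-- Affine utility `u(a,p) = r_a ⬝ p + c_a`. -/
def util {d : ℕ} {A : Type*} (r : A → Fin d → ℝ) (c : A → ℝ)
    (a : A) (p : Fin d → ℝ) : ℝ := dot (r a) p + c a

/-- The value function `val(p) = max_{a ∈ A} u(a,p)`. -/
def val {d : ℕ} {A : Type*} [Fintype A] [Nonempty A]
    (r : A → Fin d → ℝ) (c : A → ℝ) (p : Fin d → ℝ) : ℝ :=
  Finset.univ.sup' Finset.univ_nonempty fun a => util r c a p

/-- Conditional mean of the identity over a set `S`: `(1/ν(S)) ∫_S v dν(v)`. -/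
def binMean {d : ℕ} (ν : Measure (Fin d → ℝ)) (S : Set (Fin d → ℝ)) : Fin d → ℝ :=
  (ν S).toReal⁻¹ • ∫ v in S, v ∂ν

/-- The Euclidean (ℓ₂) norm on `ℝ^d`. -/
def l2 {d : ℕ} (x : Fin d → ℝ) : ℝ := Real.sqrt (∑ i, x i ^ 2)

/-- The ε-slack bin-wise consistency set: measurable `q : [0,1]^d → [0,1]^d` with
`‖∫_{B_j} (q(v) − v) dν(v)‖₂ ≤ ε` for each bin `B_j`. -/
def QbinEps {d J : ℕ} (ν : Measure (Fin d → ℝ)) (B : Fin J → Set (Fin d → ℝ))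
    (ε : ℝ) : Set ((Fin d → ℝ) → (Fin d → ℝ)) :=
  {q | Measurable q ∧ (∀ v ∈ cube d, q v ∈ cube d) ∧
    ∀ j, l2 (∫ v in B j, (q v - v) ∂ν) ≤ ε}

lemma dot_ge_neg_l2_mul {d : ℕ} (x y : Fin d → ℝ) : -(l2 x * l2 y) ≤ dot x y := by
  have h := Real.sum_mul_le_sqrt_mul_sqrt Finset.univ (fun i => -x i) y
  simp only [neg_mul, Finset.sum_neg_distrib, neg_sq] at h
  unfold l2 dot
  linarith

lemma l2_nonneg {d : ℕ} (x : Fin d → ℝ) : 0 ≤ l2 x := Real.sqrt_nonneg _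

lemma continuous_val {d : ℕ} {A : Type*} [Fintype A] [Nonempty A]
    (r : A → Fin d → ℝ) (c : A → ℝ) : Continuous (val r c) := by
  unfold val
  refine Continuous.finset_sup'_apply _ fun a _ => ?_
  unfold util dot
  fun_prop

/-- `f ∘ q` is almost surely bounded, since `q` maps the compact cube, which carries all of `ν`, to
itself. -/
lemma integrable_comp_of_cube {d : ℕ} {F : Type*} [NormedAddCommGroup F] [MeasurableSpace F]
    [BorelSpace F] [SecondCountableTopology F]
    (ν : Measure (Fin d → ℝ)) [IsProbabilityMeasure ν] (hνsupp : ν (cube d)ᶜ = 0)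
    {f : (Fin d → ℝ) → F} (hf : Continuous f)
    {q : (Fin d → ℝ) → (Fin d → ℝ)} (hq : Measurable q) (hqc : ∀ v ∈ cube d, q v ∈ cube d) :
    Integrable (fun v => f (q v)) ν := by
  obtain ⟨C, hC⟩ := (isCompact_Icc :
    IsCompact (Set.Icc (0 : Fin d → ℝ) 1)).exists_bound_of_continuousOn hf.continuousOn
  have hae : ∀ᵐ v ∂ν, v ∈ cube d := hνsupp
  refine Integrable.of_bound (hf.measurable.comp hq).aestronglyMeasurable C ?_
  filter_upwards [hae] with v hv using hC _ (hqc v hv)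

lemma integral_util {d : ℕ} {A : Type*} (r : A → Fin d → ℝ) (c : A → ℝ) (a : A)
    (μ : Measure (Fin d → ℝ)) [IsFiniteMeasure μ] {q : (Fin d → ℝ) → (Fin d → ℝ)}
    (hq : Integrable q μ) :
    Integrable (fun v => util r c a (q v)) μ ∧
      ∫ v, util r c a (q v) ∂μ = dot (r a) (∫ v, q v ∂μ) + μ.real Set.univ * c a := by
  have hqi : ∀ i, Integrable (fun v => q v i) μ := fun i => hq.eval i
  have hs : Integrable (fun v => ∑ i, r a i * q v i) μ :=
    integrable_finsetSum _ fun i _ => (hqi i).const_mul _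
  unfold util dot
  refine ⟨hs.add (integrable_const _), ?_⟩
  rw [integral_add hs (integrable_const _), integral_finsetSum _ fun i _ => (hqi i).const_mul _]
  simp [integral_const_mul, eval_integral hqi]

lemma dot_sub {d : ℕ} (x y z : Fin d → ℝ) : dot x (y - z) = dot x y - dot x z := by
  simp [dot, mul_sub]

lemma smul_binMean {d : ℕ} (ν : Measure (Fin d → ℝ)) [IsFiniteMeasure ν] {S : Set (Fin d → ℝ)}
    (hS : 0 < ν S) : (ν S).toReal • binMean ν S = ∫ v in S, v ∂ν := by
  have : (ν S).toReal ≠ 0 := (ENNReal.toReal_pos hS.ne' (measure_ne_top _ _)).ne'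
  rw [binMean, smul_inv_smul₀ this]

/-- The contribution of a single bin to the lower bound: replacing `q` by the bin mean costs at most
`max_a ‖r_a‖₂` times the bound `ε` on the miscalibration of `q` on the bin. -/
lemma bin_lower {d : ℕ} {A : Type*} [Fintype A] [Nonempty A]
    (ν : Measure (Fin d → ℝ)) [IsProbabilityMeasure ν] (hνsupp : ν (cube d)ᶜ = 0)
    (r : A → Fin d → ℝ) (c : A → ℝ) {S : Set (Fin d → ℝ)} (hS : 0 < ν S)
    {q : (Fin d → ℝ) → (Fin d → ℝ)} (hq : Measurable q) (hqc : ∀ v ∈ cube d, q v ∈ cube d)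
    {ε : ℝ} (hqε : l2 (∫ v in S, (q v - v) ∂ν) ≤ ε) :
    (ν S).toReal * val r c (binMean ν S)
        - (Finset.univ.sup' Finset.univ_nonempty fun a => l2 (r a)) * ε
      ≤ ∫ v in S, val r c (q v) ∂ν := by
  -- `a` is an optimal action at the bin mean.
  obtain ⟨a, -, ha⟩ := Finset.exists_mem_eq_sup' Finset.univ_nonempty
    (fun a => util r c a (binMean ν S))
  change val r c (binMean ν S) = _ at ha
  have hqi : IntegrableOn q S ν :=
    (integrable_comp_of_cube ν hνsupp continuous_id hq hqc).integrableOn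
  have hidi : IntegrableOn (fun v => v) S ν :=
    (integrable_comp_of_cube ν hνsupp continuous_id measurable_id fun _ h => h).integrableOn
  have hvi : IntegrableOn (fun v => val r c (q v)) S ν :=
    (integrable_comp_of_cube ν hνsupp (continuous_val r c) hq hqc).integrableOn
  obtain ⟨hui, hu⟩ := integral_util r c a (ν.restrict S) hqi
  have hmono : ∫ v in S, util r c a (q v) ∂ν ≤ ∫ v in S, val r c (q v) ∂ν :=
    integral_mono hui hvi fun v =>
      Finset.le_sup' (fun a => util r c a (q v)) (Finset.mem_univ a)
  have hCS := dot_ge_neg_l2_mul (r a) (∫ v in S, (q v - v) ∂ν)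
  have hL : l2 (r a) * l2 (∫ v in S, (q v - v) ∂ν)
      ≤ (Finset.univ.sup' Finset.univ_nonempty fun a => l2 (r a)) * ε :=
    mul_le_mul (Finset.le_sup' (fun a => l2 (r a)) (Finset.mem_univ a)) hqε (l2_nonneg _)
      ((l2_nonneg (r a)).trans (Finset.le_sup' (fun a => l2 (r a)) (Finset.mem_univ a)))
  have hdot : dot (r a) (∫ v in S, v ∂ν) = (ν S).toReal * dot (r a) (binMean ν S) := by
    rw [← smul_binMean ν hS]
    simp [dot, Finset.mul_sum, mul_left_comm]
  rw [integral_sub hqi hidi, dot_sub, hdot] at hCS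
  rw [integral_sub hqi hidi] at hL
  have hP : (ν.restrict S).real Set.univ = (ν S).toReal := by simp [Measure.real]
  rw [hP] at hu
  rw [ha, util]
  linarith

lemma integral_eq_sum_bins {d J : ℕ} (ν : Measure (Fin d → ℝ))
    (hνsupp : ν (cube d)ᶜ = 0) (B : Fin J → Set (Fin d → ℝ))
    (hBmeas : ∀ j, MeasurableSet (B j))
    (hBdisj : ∀ j j' : Fin J, j ≠ j' → Disjoint (B j) (B j'))
    (hBcover : (⋃ j, B j) = cube d) {f : (Fin d → ℝ) → ℝ} (hf : Integrable f ν) :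
    ∫ v, f v ∂ν = ∑ j, ∫ v in B j, f v ∂ν := by
  have hae : ∀ᵐ v ∂ν, v ∈ cube d := hνsupp
  rw [← integral_iUnion_fintype hBmeas (fun i j hij => hBdisj i j hij) fun j => hf.integrableOn,
    hBcover, Measure.restrict_eq_self_of_ae_mem hae]

lemma binMean_mem_cube {d : ℕ} (ν : Measure (Fin d → ℝ)) [IsProbabilityMeasure ν]
    (hνsupp : ν (cube d)ᶜ = 0) {S : Set (Fin d → ℝ)} (hS : 0 < ν S) :
    binMean ν S ∈ cube d := by
  have hae : ∀ᵐ v ∂ν, v ∈ cube d := hνsupp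
  have h := (convex_Icc (0 : Fin d → ℝ) 1).set_average_mem isClosed_Icc hS.ne'
    (measure_ne_top ν S) (f := fun v => v) (ae_restrict_of_ae hae)
    (integrable_comp_of_cube ν hνsupp continuous_id measurable_id fun _ h => h).integrableOn
  rwa [setAverage_eq] at h

/-- The step function with value the mean of `B j` on the bin `B j` (and `0` off all bins). -/
def binStep {d J : ℕ} (ν : Measure (Fin d → ℝ)) (B : Fin J → Set (Fin d → ℝ)) :
    (Fin d → ℝ) → (Fin d → ℝ) :=
  fun v => ∑ j, (B j).indicator (fun _ => binMean ν (B j)) v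

lemma binStep_eq {d J : ℕ} (ν : Measure (Fin d → ℝ)) (B : Fin J → Set (Fin d → ℝ))
    (hBdisj : ∀ j j' : Fin J, j ≠ j' → Disjoint (B j) (B j')) {j : Fin J} {v : Fin d → ℝ}
    (hv : v ∈ B j) : binStep ν B v = binMean ν (B j) := by
  rw [binStep, Finset.sum_eq_single j]
  · exact Set.indicator_of_mem hv _
  · intro k _ hk
    exact Set.indicator_of_notMem (Set.disjoint_right.1 (hBdisj k j hk) hv) _
  · simp

lemma binStep_mem {d J : ℕ} (ν : Measure (Fin d → ℝ)) [IsProbabilityMeasure ν]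
    (hνsupp : ν (cube d)ᶜ = 0) (B : Fin J → Set (Fin d → ℝ))
    (hBmeas : ∀ j, MeasurableSet (B j))
    (hBdisj : ∀ j j' : Fin J, j ≠ j' → Disjoint (B j) (B j'))
    (hBcover : (⋃ j, B j) = cube d) (hBpos : ∀ j, 0 < ν (B j)) {ε : ℝ} (hε : 0 ≤ ε) :
    binStep ν B ∈ QbinEps ν B ε := by
  have hm : Measurable (binStep ν B) :=
    Finset.measurable_sum _ fun j _ => measurable_const.indicator (hBmeas j)
  have hc : ∀ v ∈ cube d, binStep ν B v ∈ cube d := by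
    intro v hv
    rw [← hBcover] at hv
    obtain ⟨j, hj⟩ := Set.mem_iUnion.1 hv
    rw [binStep_eq ν B hBdisj hj]
    exact binMean_mem_cube ν hνsupp (hBpos j)
  refine ⟨hm, hc, fun j => ?_⟩
  have hidi : IntegrableOn (fun v => v) (B j) ν :=
    (integrable_comp_of_cube ν hνsupp continuous_id measurable_id fun _ h => h).integrableOn
  have hqi : IntegrableOn (binStep ν B) (B j) ν :=
    (integrable_comp_of_cube ν hνsupp continuous_id hm hc).integrableOn
  have h0 : ∫ v in B j, (binStep ν B v - v) ∂ν = 0 := by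
    rw [integral_sub hqi hidi, setIntegral_congr_fun (hBmeas j)
      fun v hv => binStep_eq ν B hBdisj hv, setIntegral_const, ← smul_binMean ν (hBpos j)]
    exact sub_self _
  rw [h0]
  simpa [l2] using hε

/-- value stability under ε-bin-wise calibration: with
`L = max_a ‖r_a‖₂`,
`Σ_j P_j val(m_j) − J L ε ≤ inf_{q∈Q_bin,ε} ∫ val(q(v)) dν ≤ Σ_j P_j val(m_j)`. -/
theorem eps_binwise_value_stability {d J : ℕ} {A : Type*}
    [Fintype A] [Nonempty A]
    (ν : Measure (Fin d → ℝ)) [IsProbabilityMeasure ν]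
    (hνsupp : ν (cube d)ᶜ = 0)
    (r : A → Fin d → ℝ) (c : A → ℝ)
    (B : Fin J → Set (Fin d → ℝ))
    (hBmeas : ∀ j, MeasurableSet (B j))
    (hBdisj : ∀ j j' : Fin J, j ≠ j' → Disjoint (B j) (B j'))
    (hBcover : (⋃ j, B j) = cube d)
    (hBpos : ∀ j, 0 < ν (B j))
    (ε : ℝ) (hε : 0 ≤ ε) :
    ((∑ j, (ν (B j)).toReal * val r c (binMean ν (B j)))
        - (J : ℝ) * (Finset.univ.sup' Finset.univ_nonempty fun a => l2 (r a)) * ε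
      ≤ ⨅ q : QbinEps ν B ε, ∫ v, val r c (q.1 v) ∂ν) ∧
    ((⨅ q : QbinEps ν B ε, ∫ v, val r c (q.1 v) ∂ν)
      ≤ ∑ j, (ν (B j)).toReal * val r c (binMean ν (B j))) := by
  have hlow : ∀ q : QbinEps ν B ε,
      (∑ j, (ν (B j)).toReal * val r c (binMean ν (B j)))
        - (J : ℝ) * (Finset.univ.sup' Finset.univ_nonempty fun a => l2 (r a)) * ε
      ≤ ∫ v, val r c (q.1 v) ∂ν := by
    rintro ⟨q, hq, hqc, hqε⟩
    rw [integral_eq_sum_bins ν hνsupp B hBmeas hBdisj hBcover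
      (integrable_comp_of_cube ν hνsupp (continuous_val r c) hq hqc)]
    refine le_trans (le_of_eq ?_)
      (Finset.sum_le_sum fun j _ => bin_lower ν hνsupp r c (hBpos j) hq hqc (hqε j))
    simp [Finset.sum_sub_distrib, mul_assoc]
  have hmem := binStep_mem ν hνsupp B hBmeas hBdisj hBcover hBpos hε
  have : Nonempty (QbinEps ν B ε) := ⟨⟨_, hmem⟩⟩
  refine ⟨le_ciInf hlow, (ciInf_le ⟨_, Set.forall_mem_range.2 hlow⟩ ⟨_, hmem⟩).trans_eq ?_⟩
  rw [integral_eq_sum_bins ν hνsupp B hBmeas hBdisj hBcover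
    (integrable_comp_of_cube ν hνsupp (continuous_val r c) hmem.1 hmem.2.1)]
  refine Finset.sum_congr rfl fun j _ => ?_
  rw [setIntegral_congr_fun (g := fun _ => val r c (binMean ν (B j))) (hBmeas j)
    fun v hv => congrArg (val r c) (binStep_eq ν B hBdisj hv), setIntegral_const]
  rfl
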